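/- arXiv:2304.03380 — 3 statements merged into one kernel-verified Lean document; each statement's English description precedes it below -/
import Mathlib

section
/- For i = 1, …, h, let A_i ≠ ∅, B_i ≠ ∅, and C_i be pairwise disjoint subsets of 𝒱, and set D_i = {E ⊆ A_i ∪ B_i ∪ C_i : E ∩ A_i ≠ ∅ and E ∩ B_i ≠ ∅}. Let M_1, …, M_k = 𝒱 be a non-decreasing complete sequence of marginals such that for every i and every E ∈ D_i, C_i ⊆ M(E) ⊆ A_i ∪ B_i ∪ C_i. Then a strictly positive distribution P on ∏_{V∈𝒱} X_V satisfies the conditional independences A_i ⫫ B_i | C_i for all i = 1, …, h if and only if λ^{M(E)}_E(P)(e) = 0 for every E ∈ ∪_{i=1}^h D_i and every cell e. -/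
/-!
The cells are lifted to the full product `Ω = ∀ v, X v`, where computing a marginal becomes, up to a
constant factor, the conditional expectation `avg S` with respect to the uniform measure on `Ω`.
These operators satisfy `avg S (avg T f) = avg (S ∩ T) f`, are self-adjoint, and commute with
multiplication by functions of the coordinates in `S`.  Log-linear parameters in a marginal `M` are
the terms `eff E g` of the ANOVA decomposition of `g = log P_M`; the term `eff E g` vanishes when
`g` depends only on a set of coordinates not containing `E` (`eff_eq_zero`).

Write `S = A ∪ C` and `T = B ∪ C`, so that `S ∩ T = C`.  Independence passes to every marginal `M`
with `C ⊆ M ⊆ S ∪ T`: there `log P_M` is a sum of a function of `S ∩ M` and one of `T ∩ M`, so all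
effects contained neither in `S` nor in `T` vanish.

Conversely, factorization of `P_M` is shown for every `M = M(E)`, `E ∈ D`, by induction on the
position of `M` in the sequence.  Let `p = P_M`, and let `q` be the product form
`P_{S ∩ M} P_{T ∩ M} / P_C`.  Each effect of `log p - log q` either vanishes by hypothesis, or is
supported on a subset of `S ∩ M`, of `T ∩ M`, or of `M ∩ L` with `L` an earlier marginal, and by
the induction hypothesis `p` and `q` have the same marginals on all of these sets.  Hence
`∑ (p - q) (log p - log q) = 0`, and as every summand is nonnegative and vanishes only when the
arguments agree, `p = q` (`eq_of_effects`).
-/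


open Finset

abbrev Cell {V : Type} (X : V → Type) (E : Finset V) : Type := (w : {x // x ∈ E}) → X w.1

def restrictCell {V : Type} {X : V → Type} {E F : Finset V} (h : F ⊆ E) (e : Cell X E) :
    Cell X F := fun w => e ⟨w.1, h w.2⟩

variable {V : Type} [Fintype V] [DecidableEq V]

/-- The marginal of `P` on the subset `M` of variables. -/
noncomputable def marginal (X : V → Type) [∀ v, Fintype (X v)] [∀ v, DecidableEq (X v)]
    (P : (∀ v, X v) → ℝ) (M : Finset V) (m : Cell X M) : ℝ :=
  ∑ v : (∀ v, X v), if ∀ w : {x // x ∈ M}, v w.1 = m w then P v else 0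

/-- The log-linear parameter of effect `E` computed in the marginal `M`. -/
noncomputable def mllp (X : V → Type) [∀ v, Fintype (X v)] [∀ v, DecidableEq (X v)]
    (P : (∀ v, X v) → ℝ) (M : Finset V) (E : Finset V) (e : Cell X E) : ℝ :=
  (Fintype.card (Cell X (M \ E)) : ℝ)⁻¹ *
    ∑ m : Cell X M,
      (if ∀ (w : V) (hE : w ∈ E) (hM : w ∈ M), m ⟨w, hM⟩ = e ⟨w, hE⟩
       then Real.log (marginal X P M m) else 0)
  - ∑ F ∈ (E.powerset.erase E).attach,
      mllp X P M F.1 (fun w => e ⟨w.1, Finset.mem_powerset.mp (Finset.mem_of_mem_erase F.2) w.2⟩)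
termination_by E.card
decreasing_by
  have h := F.2
  rw [Finset.mem_erase, Finset.mem_powerset] at h
  exact Finset.card_lt_card (HasSubset.Subset.ssubset_of_ne h.2 h.1)

/-- `P` satisfies the conditional independence `A ⫫ B | C`:
`P_{A∪B∪C}(a,b,c) · P_C(c) = P_{A∪C}(a,c) · P_{B∪C}(b,c)` for all cells. -/
def CondIndep {V : Type} [Fintype V] [DecidableEq V]
    (X : V → Type) [∀ v, Fintype (X v)] [∀ v, DecidableEq (X v)]
    (P : (∀ v, X v) → ℝ) (A B C : Finset V) : Prop :=
  ∀ m : Cell X (A ∪ B ∪ C),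
    marginal X P (A ∪ B ∪ C) m *
        marginal X P C (restrictCell Finset.subset_union_right m) =
      marginal X P (A ∪ C)
          (restrictCell (Finset.union_subset_union_left Finset.subset_union_left) m) *
        marginal X P (B ∪ C)
          (restrictCell (Finset.union_subset_union_left Finset.subset_union_right) m)

section Averages

variable {X : V → Type} [∀ v, Fintype (X v)]

/-! ### Averaging operators -/

/-- The conditional expectation of `f` given the coordinates in `S`, under the uniform measure:
the coordinates outside `S` are resampled uniformly. -/
noncomputable def avg (S : Finset V) (f : (∀ v, X v) → ℝ) (v : ∀ v, X v) : ℝ :=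
  (Fintype.card (∀ v, X v) : ℝ)⁻¹ * ∑ u : (∀ v, X v), f (S.piecewise v u)

/-- Swapping the coordinates outside `S` between two points is an involution of `Ω × Ω`. -/
lemma sum_swap (S : Finset V) (f : (∀ v, X v) → (∀ v, X v) → ℝ) :
    ∑ u, ∑ w, f (S.piecewise u w) (S.piecewise w u) = ∑ u, ∑ w, f u w := by
  rw [← Fintype.sum_prod_type', ← Fintype.sum_prod_type']
  have hinv : Function.Involutive (fun p : (∀ v, X v) × (∀ v, X v) =>
      (S.piecewise p.1 p.2, S.piecewise p.2 p.1)) := by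
    rintro ⟨u, w⟩
    ext x <;> by_cases hx : x ∈ S <;> simp [hx]
  exact Equiv.sum_comp hinv.toPerm (fun p => f p.1 p.2)

lemma dependsOn_avg (S : Finset V) (f : (∀ v, X v) → ℝ) : DependsOn (avg S f) (S : Set V) := by
  intro v w hvw
  unfold avg
  congr 1
  refine Finset.sum_congr rfl fun u _ => congrArg f ?_
  ext x
  by_cases hx : x ∈ S
  · simpa [hx] using hvw x hx
  · simp [hx]

lemma avg_sub (S : Finset V) (f g : (∀ v, X v) → ℝ) :
    avg S (f - g) = avg S f - avg S g := by
  ext v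
  simp [avg, Finset.sum_sub_distrib, mul_sub]

lemma avg_of_dependsOn {S T : Finset V} {f : (∀ v, X v) → ℝ} (hf : DependsOn f (T : Set V)) :
    avg S f = avg (S ∩ T) f := by
  ext v
  unfold avg
  congr 1
  refine Finset.sum_congr rfl fun u _ => hf fun x hx => ?_
  have hx' : x ∈ T := hx
  by_cases hxS : x ∈ S <;> simp [hx', hxS]

lemma avg_pos [∀ v, Nonempty (X v)] (S : Finset V) {f : (∀ v, X v) → ℝ} (hf : ∀ v, 0 < f v)
    (v : ∀ v, X v) : 0 < avg S f v := by
  unfold avg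
  have : 0 < ∑ u : (∀ v, X v), f (S.piecewise v u) :=
    Finset.sum_pos (fun _ _ => hf _) Finset.univ_nonempty
  have h2 : (0 : ℝ) < Fintype.card (∀ v, X v) := by exact_mod_cast Fintype.card_pos
  positivity

lemma avg_mul {S : Finset V} {f : (∀ v, X v) → ℝ} (hf : DependsOn f (S : Set V))
    (g : (∀ v, X v) → ℝ) : avg S (f * g) = f * avg S g := by
  ext v
  have : ∀ u, f (S.piecewise v u) = f v := fun u => hf fun x hx => by
    have hx' : x ∈ S := hx
    simp [hx']
  simp only [avg, Pi.mul_apply, this, ← Finset.mul_sum]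
  ring

lemma avg_self [∀ v, Nonempty (X v)] {S : Finset V} {f : (∀ v, X v) → ℝ}
    (hf : DependsOn f (S : Set V)) : avg S f = f := by
  have h1 : avg S (1 : (∀ v, X v) → ℝ) = 1 := by
    ext v
    have : (Fintype.card (∀ v, X v) : ℝ) ≠ 0 := by exact_mod_cast Fintype.card_ne_zero
    simp only [avg, Pi.one_apply, Finset.sum_const, Finset.card_univ, nsmul_eq_mul, mul_one]
    exact inv_mul_cancel₀ this
  have := avg_mul hf 1
  rwa [h1, mul_one] at this

lemma avg_avg [∀ v, Nonempty (X v)] (S T : Finset V) (f : (∀ v, X v) → ℝ) :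
    avg S (avg T f) = avg (S ∩ T) f := by
  ext v
  have hc : (Fintype.card (∀ v, X v) : ℝ) ≠ 0 := by exact_mod_cast Fintype.card_ne_zero
  have hpw : ∀ u w : (∀ v, X v), T.piecewise (S.piecewise v u) w
      = (S ∩ T).piecewise v (T.piecewise u w) := by
    intro u w
    ext x
    by_cases hS : x ∈ S <;> by_cases hT : x ∈ T <;> simp [hS, hT]
  simp only [avg, hpw, ← Finset.mul_sum]
  rw [sum_swap T (fun u _ => f ((S ∩ T).piecewise v u))]
  simp only [Finset.sum_const, Finset.card_univ, nsmul_eq_mul, ← Finset.mul_sum]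
  field_simp

lemma sum_avg_mul (S : Finset V) (f g : (∀ v, X v) → ℝ) :
    ∑ v, avg S f v * g v = ∑ v, f v * avg S g v := by
  have key := sum_swap S (fun u w => f (S.piecewise u w) * g u)
  have hpw : ∀ u w : (∀ v, X v), S.piecewise (S.piecewise u w) (S.piecewise w u) = u := by
    intro u w
    ext x
    by_cases hS : x ∈ S <;> simp [hS]
  simp only [hpw] at key
  have h1 : ∑ v, avg S f v * g v = (Fintype.card (∀ v, X v) : ℝ)⁻¹ *
      ∑ u, ∑ w, f (S.piecewise u w) * g u := by
    rw [Finset.mul_sum]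
    refine Finset.sum_congr rfl fun v _ => ?_
    rw [avg, mul_assoc, Finset.sum_mul]
  have h2 : ∑ v, f v * avg S g v = (Fintype.card (∀ v, X v) : ℝ)⁻¹ *
      ∑ u, ∑ w, f u * g (S.piecewise u w) := by
    rw [Finset.mul_sum]
    refine Finset.sum_congr rfl fun v _ => ?_
    rw [avg, ← Finset.mul_sum]
    ring
  rw [h1, h2, key]

/-- Marginalizing the product form `p_S p_T / p_{S ∩ T}` to a set containing `S ∩ T`. -/
lemma avg_prodForm [∀ v, Nonempty (X v)] {P : (∀ v, X v) → ℝ} {S T K : Finset V}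
    (h1 : S ∩ T ⊆ K) (h2 : K ⊆ S ∪ T) :
    avg K (avg S P * avg T P / avg (S ∩ T) P)
      = avg (S ∩ K) P * avg (T ∩ K) P / avg (S ∩ T) P := by
  have mono : ∀ {F G : Finset V} {f : (∀ v, X v) → ℝ}, F ⊆ G → DependsOn f (F : Set V) →
      DependsOn f (G : Set V) := fun hFG hf v w hvw => hf fun x hx => hvw x (hFG hx)
  have hmul : ∀ {F : Finset V} {f g : (∀ v, X v) → ℝ}, DependsOn f (F : Set V) →
      DependsOn g (F : Set V) → DependsOn (f / g) (F : Set V) := fun hf hg v w hvw => by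
    rw [Pi.div_apply, Pi.div_apply, hf hvw, hg hvw]
  -- The coordinates in `T \ K` are averaged out before those in `S \ K`.
  have hK : K ∩ (S ∪ T ∩ K) = K := by
    ext x
    have := @h2 x
    simp only [Finset.mem_union, Finset.mem_inter] at *
    tauto
  have hT : (S ∪ T ∩ K) ∩ T = T ∩ K := by
    ext x
    have := @h1 x
    simp only [Finset.mem_union, Finset.mem_inter] at *
    tauto
  rw [← hK, ← avg_avg, hK]
  have e1 : avg S P * avg T P / avg (S ∩ T) P = (avg S P / avg (S ∩ T) P) * avg T P := by
    ext v; simp only [Pi.mul_apply, Pi.div_apply]; ring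
  have d1 : DependsOn (avg S P / avg (S ∩ T) P) ((S ∪ T ∩ K : Finset V) : Set V) :=
    hmul (mono subset_union_left (dependsOn_avg _ _))
      (mono (inter_subset_left.trans subset_union_left) (dependsOn_avg _ _))
  rw [e1, avg_mul d1, avg_avg, hT]
  have e2 : avg S P / avg (S ∩ T) P * avg (T ∩ K) P
      = (avg (T ∩ K) P / avg (S ∩ T) P) * avg S P := by
    ext v; simp only [Pi.mul_apply, Pi.div_apply]; ring
  have d2 : DependsOn (avg (T ∩ K) P / avg (S ∩ T) P) (K : Set V) :=
    hmul (mono inter_subset_right (dependsOn_avg _ _)) (mono h1 (dependsOn_avg _ _))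
  rw [e2, avg_mul d2, avg_avg, Finset.inter_comm K S]
  ext v; simp only [Pi.mul_apply, Pi.div_apply]; ring

/-! ### Effects -/

/-- The term of index `E` in the ANOVA decomposition of `g`. -/
noncomputable def eff (E : Finset V) (g : (∀ v, X v) → ℝ) (v : ∀ v, X v) : ℝ :=
  avg E g v - ∑ F ∈ (E.powerset.erase E).attach, eff F.1 g v
termination_by E.card
decreasing_by
  have h := F.2
  rw [Finset.mem_erase, Finset.mem_powerset] at h
  exact Finset.card_lt_card (Finset.ssubset_iff_subset_ne.2 ⟨h.2, h.1⟩)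

lemma eff_eq (E : Finset V) (g : (∀ v, X v) → ℝ) (v : ∀ v, X v) :
    eff E g v = avg E g v - ∑ F ∈ E.ssubsets, eff F g v := by
  rw [eff, Finset.sum_attach (E.powerset.erase E) (fun F => eff F g v)]
  rfl

lemma sum_eff (E : Finset V) (g : (∀ v, X v) → ℝ) (v : ∀ v, X v) :
    ∑ F ∈ E.powerset, eff F g v = avg E g v := by
  rw [← Finset.add_sum_erase _ _ (Finset.mem_powerset_self E), eff_eq]
  simp [Finset.ssubsets]

lemma eff_sub (E : Finset V) (f g : (∀ v, X v) → ℝ) (v : ∀ v, X v) :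
    eff E (f - g) v = eff E f v - eff E g v := by
  induction E using Finset.strongInduction with
  | H E ih =>
    rw [eff_eq, eff_eq E f, eff_eq E g, avg_sub,
      Finset.sum_congr rfl fun F hF => ih F (Finset.mem_ssubsets.1 hF), Finset.sum_sub_distrib,
      Pi.sub_apply]
    ring

lemma dependsOn_eff (E : Finset V) (g : (∀ v, X v) → ℝ) : DependsOn (eff E g) (E : Set V) := by
  induction E using Finset.strongInduction with
  | H E ih =>
    intro v w hvw
    rw [eff_eq, eff_eq, dependsOn_avg E g hvw]
    congr 1
    refine Finset.sum_congr rfl fun F hF => ih F (Finset.mem_ssubsets.1 hF) fun x hx => hvw x ?_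
    exact (Finset.mem_ssubsets.1 hF).1 hx

lemma eff_eq_zero {E S : Finset V} {f : (∀ v, X v) → ℝ} (hf : DependsOn f (S : Set V))
    (hES : ¬ E ⊆ S) (v : ∀ v, X v) : eff E f v = 0 := by
  induction E using Finset.strongInduction with
  | H E ih =>
    have hsub : (E ∩ S).powerset ⊆ E.ssubsets := by
      intro F hF
      rw [Finset.mem_powerset] at hF
      rw [Finset.mem_ssubsets]
      refine ⟨hF.trans inter_subset_left, fun h => hES (h.trans (hF.trans inter_subset_right))⟩
    rw [eff_eq, ← Finset.sum_subset hsub, sum_eff, avg_of_dependsOn hf, sub_self]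
    intro F hF hF'
    rw [Finset.mem_ssubsets] at hF
    refine ih F hF fun h => hF' ?_
    rw [Finset.mem_powerset]
    exact Finset.subset_inter hF.1 h

lemma mul_log_sub_nonneg {a b : ℝ} (ha : 0 < a) (hb : 0 < b) :
    0 ≤ (a - b) * (Real.log a - Real.log b) := by
  rcases le_total a b with h | h
  · exact mul_nonneg_of_nonpos_of_nonpos (by linarith) (by linarith [Real.log_le_log ha h])
  · exact mul_nonneg (by linarith) (by linarith [Real.log_le_log hb h])

/-- Uniqueness in the mixed parametrization: positive functions of the coordinates in `M` coincide
if, for each effect `E`, they have equal effects or equal marginals on some `K ⊇ E`. -/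
lemma eq_of_effects [∀ v, Nonempty (X v)] {M : Finset V} {p q : (∀ v, X v) → ℝ}
    (hp : ∀ v, 0 < p v) (hq : ∀ v, 0 < q v)
    (dp : DependsOn p (M : Set V)) (dq : DependsOn q (M : Set V))
    (H : ∀ E ⊆ M, (∀ v, eff E (fun v => Real.log (p v)) v = eff E (fun v => Real.log (q v)) v) ∨
      ∃ K, E ⊆ K ∧ avg K p = avg K q) : p = q := by
  set g : (∀ v, X v) → ℝ := (fun v => Real.log (p v)) - (fun v => Real.log (q v)) with hg
  have dg : DependsOn g (M : Set V) := by
    intro v w hvw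
    simp only [hg, Pi.sub_apply, dp hvw, dq hvw]
  have hexp : ∀ v, g v = ∑ E ∈ M.powerset, eff E g v := by
    intro v
    rw [sum_eff, avg_self dg]
  have hzero : ∑ v, (p - q) v * g v = 0 := by
    simp only [hexp, Finset.mul_sum]
    rw [Finset.sum_comm]
    refine Finset.sum_eq_zero fun E hE => ?_
    rcases H E (Finset.mem_powerset.1 hE) with h | ⟨K, hEK, hK⟩
    · refine Finset.sum_eq_zero fun v _ => ?_
      rw [hg, eff_sub, h, sub_self, mul_zero]
    · have d : DependsOn (eff E g) (K : Set V) :=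
        fun v w hvw => dependsOn_eff E g fun x hx => hvw x (hEK hx)
      rw [← avg_self d, ← sum_avg_mul, avg_sub, hK, sub_self]
      simp
  have hnn : ∀ v ∈ Finset.univ, 0 ≤ (p - q) v * g v := fun v _ =>
    mul_log_sub_nonneg (hp v) (hq v)
  ext v
  have hv := (Finset.sum_eq_zero_iff_of_nonneg hnn).1 hzero v (Finset.mem_univ v)
  rcases mul_eq_zero.1 hv with h | h
  · exact sub_eq_zero.1 h
  · exact Real.log_injOn_pos (hp v) (hq v) (sub_eq_zero.1 h)

/-- The product form has no effect contained neither in `S` nor in `T`. -/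
lemma eff_log_prodForm [∀ v, Nonempty (X v)] {P : (∀ v, X v) → ℝ} (hP : ∀ v, 0 < P v)
    {S T E : Finset V} (hS : ¬ E ⊆ S) (hT : ¬ E ⊆ T) (v : ∀ v, X v) :
    eff E (fun v => Real.log ((avg S P * avg T P / avg (S ∩ T) P) v)) v = 0 := by
  have e : (fun v => Real.log ((avg S P * avg T P / avg (S ∩ T) P) v))
      = (fun v => Real.log (avg S P v))
        - ((fun v => Real.log (avg (S ∩ T) P v)) - (fun v => Real.log (avg T P v))) := by
    ext v
    have h1 := (avg_pos S hP v).ne'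
    have h2 := (avg_pos T hP v).ne'
    have h3 := (avg_pos (S ∩ T) hP v).ne'
    simp only [Pi.mul_apply, Pi.div_apply, Pi.sub_apply]
    rw [Real.log_div (mul_ne_zero h1 h2) h3, Real.log_mul h1 h2]
    ring
  have d : ∀ F : Finset V, DependsOn (fun v => Real.log (avg F P v)) (F : Set V) :=
    fun F v w hvw => by simp only [dependsOn_avg F P hvw]
  rw [e, eff_sub, eff_sub, eff_eq_zero (d S) hS, eff_eq_zero (d T) hT,
    eff_eq_zero (d (S ∩ T)) fun h => hS (h.trans inter_subset_left)]
  simp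

/-! ### Translation from cells to the full product -/

/-- The number of points of the product that lie over a given cell of `S`. -/
def fib (X : V → Type) [∀ v, Fintype (X v)] (S : Finset V) : ℕ :=
  ∏ x, if x ∈ S then 1 else Fintype.card (X x)

lemma fib_pos [∀ v, Nonempty (X v)] (S : Finset V) : 0 < fib X S :=
  Finset.prod_pos fun x _ => by split_ifs <;> simp [Fintype.card_pos]

lemma exists_extend [∀ v, Nonempty (X v)] {S : Finset V} (m : Cell X S) :
    ∃ v : ∀ v, X v, m = fun w : {x // x ∈ S} => v w.1 := by
  classical
  refine ⟨fun x => if hx : x ∈ S then m ⟨x, hx⟩ else Classical.arbitrary _, ?_⟩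
  ext w
  simp

lemma fib_mul (S T : Finset V) : fib X (S ∪ T) * fib X (S ∩ T) = fib X S * fib X T := by
  unfold fib
  rw [← Finset.prod_mul_distrib, ← Finset.prod_mul_distrib]
  refine Finset.prod_congr rfl fun x _ => ?_
  by_cases hS : x ∈ S <;> by_cases hT : x ∈ T <;> simp [hS, hT]

lemma fib_card {E M : Finset V} (h : E ⊆ M) :
    fib X E = Fintype.card (Cell X (M \ E)) * fib X M := by
  have h1 : Fintype.card (Cell X (M \ E)) = ∏ x, if x ∈ M \ E then Fintype.card (X x) else 1 := by
    rw [Fintype.card_pi, Finset.prod_ite_mem, Finset.univ_inter]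
    exact Finset.prod_coe_sort (M \ E) (fun x => Fintype.card (X x))
  rw [h1, fib, fib, ← Finset.prod_mul_distrib]
  refine Finset.prod_congr rfl fun x _ => ?_
  have := @h x
  by_cases hE : x ∈ E <;> by_cases hM : x ∈ M <;> simp_all

variable [∀ v, DecidableEq (X v)]

lemma card_fiber (S : Finset V) (v : ∀ v, X v) :
    #{u : (∀ v, X v) | ∀ x ∈ S, u x = v x} = fib X S := by
  have : ({u : (∀ v, X v) | ∀ x ∈ S, u x = v x} : Finset (∀ v, X v))
      = Fintype.piFinset (fun x => if x ∈ S then {v x} else Finset.univ) := by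
    ext u
    simp only [Finset.mem_filter, Finset.mem_univ, true_and, Fintype.mem_piFinset]
    refine forall_congr' fun x => ?_
    by_cases hx : x ∈ S <;> simp [hx]
  rw [this, Fintype.card_piFinset, fib]
  refine Finset.prod_congr rfl fun x _ => ?_
  split_ifs <;> simp

lemma sum_fiber [∀ v, Nonempty (X v)] (S : Finset V) (f : (∀ v, X v) → ℝ) (v : ∀ v, X v) :
    (∑ u, if ∀ x ∈ S, u x = v x then f u else 0) = fib X S * avg S f v := by
  have hc : (Fintype.card (∀ v, X v) : ℝ) ≠ 0 := by exact_mod_cast Fintype.card_ne_zero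
  have key := sum_swap S (fun u _ => if ∀ x ∈ S, u x = v x then f u else 0)
  have h1 : ∀ u w : (∀ v, X v),
      (if ∀ x ∈ S, S.piecewise u w x = v x then f (S.piecewise u w) else 0)
        = (if ∀ x ∈ S, u x = v x then 1 else 0) * f (S.piecewise v w) := by
    intro u w
    have hiff : (∀ x ∈ S, S.piecewise u w x = v x) ↔ ∀ x ∈ S, u x = v x :=
      forall₂_congr fun x hx => by simp [hx]
    by_cases hu : ∀ x ∈ S, u x = v x
    · rw [if_pos (hiff.2 hu), if_pos hu, one_mul]
      congr 1
      ext x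
      by_cases hx : x ∈ S
      · simp [hx, hu x hx]
      · simp [hx]
    · rw [if_neg (fun h => hu (hiff.1 h)), if_neg hu, zero_mul]
  simp only [h1, Finset.sum_const, Finset.card_univ, nsmul_eq_mul, ← Finset.mul_sum] at key
  rw [← Finset.sum_mul, Finset.sum_boole, card_fiber] at key
  rw [avg, mul_left_comm, key]
  field_simp

lemma marginal_eq [∀ v, Nonempty (X v)] (P : (∀ v, X v) → ℝ) (S : Finset V) (v : ∀ v, X v) :
    marginal X P S (fun w => v w.1) = fib X S * avg S P v := by
  rw [← sum_fiber, marginal]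
  refine Finset.sum_congr rfl fun u _ => ?_
  simp only [Subtype.forall]

lemma sum_cell [∀ v, Nonempty (X v)] (M : Finset V) (G : Cell X M → ℝ) :
    ∑ u : (∀ v, X v), G (fun w => u w.1) = fib X M * ∑ m, G m := by
  rw [← Finset.sum_fiberwise (s := Finset.univ)
    (g := fun u : (∀ v, X v) => ((fun w => u w.1) : Cell X M)), Finset.mul_sum]
  refine Finset.sum_congr rfl fun m _ => ?_
  obtain ⟨v, rfl⟩ := exists_extend m
  rw [Finset.sum_congr rfl (g := fun _ => G (fun w => v w.1))
    fun u hu => by rw [(Finset.mem_filter.1 hu).2]]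
  rw [Finset.sum_const, nsmul_eq_mul, ← card_fiber M v]
  congr 3
  ext u
  simp [funext_iff]

lemma mllp_eq_eff [∀ v, Nonempty (X v)] (P : (∀ v, X v) → ℝ) {M E : Finset V} (hEM : E ⊆ M)
    (v : ∀ v, X v) :
    mllp X P M E (fun w => v w.1)
      = eff E (fun u => Real.log (marginal X P M (fun w => u w.1))) v := by
  induction E using Finset.strongInduction with
  | H E ih =>
    rw [mllp, eff]
    congr 1
    · have h1 := sum_cell M (fun m : Cell X M =>
        if ∀ (w : V) (hE : w ∈ E) (hM : w ∈ M), m ⟨w, hM⟩ = v w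
          then Real.log (marginal X P M m) else 0)
      have h2 := sum_fiber E (fun u => Real.log (marginal X P M (fun w => u w.1))) v
      have h3 : ∀ u : (∀ v, X v), (∀ (w : V) (hE : w ∈ E) (hM : w ∈ M), u w = v w) ↔
          ∀ x ∈ E, u x = v x :=
        fun u => ⟨fun h x hx => h x hx (hEM hx), fun h x hx _ => h x hx⟩
      simp only [h3] at h1
      rw [h2, fib_card hEM] at h1
      have hf : (fib X M : ℝ) ≠ 0 := by exact_mod_cast (fib_pos M).ne'
      have hc : (Fintype.card (Cell X (M \ E)) : ℝ) ≠ 0 := by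
        exact_mod_cast Fintype.card_ne_zero
      push_cast at h1
      rw [inv_mul_eq_iff_eq_mul₀ hc]
      apply mul_left_cancel₀ hf
      rw [← h1]
      ring
    · refine Finset.sum_congr rfl fun F _ => ?_
      have hF := Finset.mem_ssubsets.1 F.2
      exact ih F.1 hF (hF.1.trans hEM)

/-- For nonempty effects the normalizing constant of the marginal plays no role. -/
lemma mllp_eq_eff_avg [∀ v, Nonempty (X v)] {P : (∀ v, X v) → ℝ} (hP : ∀ v, 0 < P v)
    {M E : Finset V} (hEM : E ⊆ M) (hE : E.Nonempty) (v : ∀ v, X v) :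
    mllp X P M E (fun w => v w.1) = eff E (fun u => Real.log (avg M P u)) v := by
  have e : (fun u : (∀ v, X v) => Real.log (marginal X P M (fun w => u w.1)))
      = (fun u => Real.log (avg M P u)) - (fun _ => - Real.log (fib X M)) := by
    ext u
    have hf : (fib X M : ℝ) ≠ 0 := by exact_mod_cast (fib_pos M).ne'
    rw [marginal_eq, Real.log_mul hf (avg_pos M hP u).ne', Pi.sub_apply]
    ring
  have d : DependsOn (fun _ : (∀ v, X v) => - Real.log (fib X M)) ((∅ : Finset V) : Set V) :=
    fun _ _ _ => rfl
  rw [mllp_eq_eff P hEM, e, eff_sub, eff_eq_zero d fun h => hE.ne_empty (subset_empty.1 h),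
    sub_zero]

lemma condIndep_iff [∀ v, Nonempty (X v)] {P : (∀ v, X v) → ℝ} (hP : ∀ v, 0 < P v)
    {A B C S T : Finset V} (hS : S = A ∪ C) (hT : T = B ∪ C) (hC : S ∩ T = C) :
    CondIndep X P A B C ↔ avg (S ∪ T) P = avg S P * avg T P / avg (S ∩ T) P := by
  have hU : A ∪ B ∪ C = S ∪ T := by
    clear hC
    subst hS hT
    ext x
    simp only [Finset.mem_union]
    tauto
  have step : ∀ v : (∀ v, X v),
      (marginal X P (A ∪ B ∪ C) (fun w => v w.1) * marginal X P C (fun w => v w.1)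
        = marginal X P (A ∪ C) (fun w => v w.1) * marginal X P (B ∪ C) (fun w => v w.1)) ↔
      avg (S ∪ T) P v = (avg S P * avg T P / avg (S ∩ T) P) v := by
    intro v
    simp only [marginal_eq]
    rw [← hS, ← hT, hU, ← hC]
    have h3 := (avg_pos (S ∩ T) hP v).ne'
    have hf : (fib X (S ∪ T) * fib X (S ∩ T) : ℝ) = fib X S * fib X T := by
      exact_mod_cast fib_mul S T
    have hf0 : (fib X S * fib X T : ℝ) ≠ 0 := by
      exact_mod_cast (Nat.mul_pos (fib_pos S) (fib_pos T)).ne'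
    rw [Pi.div_apply, Pi.mul_apply, eq_div_iff h3, mul_mul_mul_comm, mul_mul_mul_comm _ (avg S P v),
      hf, mul_right_inj' hf0]
  constructor
  · intro h
    ext v
    exact (step v).1 (h (fun w => v w.1))
  · intro h m
    obtain ⟨v, rfl⟩ := exists_extend m
    exact (step v).2 (congrFun h v)

end Averages

/-- Given pairwise disjoint triples `(A i, B i, C i)` with `A i, B i ≠ ∅`,
let `D i` be the collection of subsets of `A i ∪ B i ∪ C i` meeting both `A i` and `B i`.
If a non-decreasing complete sequence of marginals satisfies
`C i ⊆ M(E) ⊆ A i ∪ B i ∪ C i` for every `i` and every `E ∈ D i`, then a strictly positive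
distribution satisfies all the conditional independences `A i ⫫ B i | C i` if and only if
`λ^{M(E)}_E(e) = 0` for every `E ∈ ⋃ i, D i` and every cell `e`. -/
theorem condIndeps_iff_mllp_zero
    {V : Type} [Fintype V] [DecidableEq V]
    (X : V → Type) [∀ v, Fintype (X v)] [∀ v, DecidableEq (X v)]
    (hX : ∀ v, 2 ≤ Fintype.card (X v))
    (h : ℕ) (A B C : Fin h → Finset V)
    (hA : ∀ i, (A i).Nonempty) (hB : ∀ i, (B i).Nonempty)
    (hdisj : ∀ i, Disjoint (A i) (B i) ∧ Disjoint (A i) (C i) ∧ Disjoint (B i) (C i))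
    (k : ℕ) (M : Fin (k + 1) → Finset V)
    (hnd : ∀ i j : Fin (k + 1), i < j → ¬ M j ⊆ M i)
    (hcomp : M (Fin.last k) = Finset.univ)
    (idx : Finset V → Fin (k + 1))
    (hidx : ∀ E : Finset V, E ⊆ M (idx E) ∧ ∀ j : Fin (k + 1), j < idx E → ¬ E ⊆ M j)
    (hcond : ∀ i : Fin h,
      ∀ E ∈ ((A i ∪ B i ∪ C i).powerset).filter
          (fun E => (E ∩ A i).Nonempty ∧ (E ∩ B i).Nonempty),
        C i ⊆ M (idx E) ∧ M (idx E) ⊆ A i ∪ B i ∪ C i)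
    (P : (∀ v, X v) → ℝ) (hPpos : ∀ v, 0 < P v) (hPsum : ∑ v, P v = 1) :
    (∀ i : Fin h, CondIndep X P (A i) (B i) (C i)) ↔
      (∀ i : Fin h,
        ∀ E ∈ ((A i ∪ B i ∪ C i).powerset).filter
            (fun E => (E ∩ A i).Nonempty ∧ (E ∩ B i).Nonempty),
          ∀ e : Cell X E, mllp X P (M (idx E)) E e = 0) := by
  classical
  have : ∀ v, Nonempty (X v) := fun v => Fintype.card_pos_iff.1 (by have := hX v; omega)
  refine forall_congr' fun i => ?_
  obtain ⟨hAB, hAC, hBC⟩ := hdisj i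
  obtain ⟨S, hS⟩ : ∃ S, S = A i ∪ C i := ⟨_, rfl⟩
  obtain ⟨T, hT⟩ : ∃ T, T = B i ∪ C i := ⟨_, rfl⟩
  have hC : S ∩ T = C i := by
    rw [hS, hT, ← Finset.inter_union_distrib_right, Finset.disjoint_iff_inter_eq_empty.1 hAB,
      Finset.empty_union]
  have hU : A i ∪ B i ∪ C i = S ∪ T := by
    rw [hS, hT]
    ext x
    simp only [Finset.mem_union]
    tauto
  have hmem : ∀ E, E ∈ ((A i ∪ B i ∪ C i).powerset).filter
      (fun E => (E ∩ A i).Nonempty ∧ (E ∩ B i).Nonempty) ↔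
      E ⊆ S ∪ T ∧ ¬ E ⊆ S ∧ ¬ E ⊆ T := by
    intro E
    rw [Finset.mem_filter, Finset.mem_powerset, hU]
    refine and_congr_right fun hE => ?_
    rw [and_comm]
    refine and_congr ?_ ?_
    · rw [Finset.not_subset]
      constructor
      · rintro ⟨x, hx⟩
        rw [Finset.mem_inter] at hx
        refine ⟨x, hx.1, fun h => ?_⟩
        rw [hS, Finset.mem_union] at h
        rcases h with h | h
        · exact Finset.disjoint_left.1 hAB h hx.2
        · exact Finset.disjoint_left.1 hBC hx.2 h
      · rintro ⟨x, hx, hxS⟩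
        have := hE hx
        rw [hS, Finset.mem_union] at hxS
        rw [hS, hT] at this
        simp only [Finset.mem_union] at this
        exact ⟨x, Finset.mem_inter.2 ⟨hx, by tauto⟩⟩
    · rw [Finset.not_subset]
      constructor
      · rintro ⟨x, hx⟩
        rw [Finset.mem_inter] at hx
        refine ⟨x, hx.1, fun h => ?_⟩
        rw [hT, Finset.mem_union] at h
        rcases h with h | h
        · exact Finset.disjoint_left.1 hAB hx.2 h
        · exact Finset.disjoint_left.1 hAC hx.2 h
      · rintro ⟨x, hx, hxT⟩
        have := hE hx
        rw [hT, Finset.mem_union] at hxT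
        rw [hS, hT] at this
        simp only [Finset.mem_union] at this
        exact ⟨x, Finset.mem_inter.2 ⟨hx, by tauto⟩⟩
  have hc := hcond i
  simp only [hmem] at hc ⊢
  rw [hU, ← hC] at hc
  rw [condIndep_iff hPpos hS hT hC]
  have hll : ∀ E, E ⊆ S ∪ T ∧ ¬ E ⊆ S ∧ ¬ E ⊆ T → ∀ v : (∀ v, X v),
      mllp X P (M (idx E)) E (fun w => v w.1)
        = eff E (fun u => Real.log (avg (M (idx E)) P u)) v := by
    intro E hE v
    refine mllp_eq_eff_avg hPpos (hidx E).1 ?_ v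
    rw [Finset.nonempty_iff_ne_empty]
    rintro rfl
    exact hE.2.1 (Finset.empty_subset _)
  have hint : ∀ {K : Finset V}, S ∩ T ⊆ K → (S ∩ K) ∩ (T ∩ K) = S ∩ T := by
    intro K hK
    rw [← Finset.inter_inter_distrib_right, Finset.inter_eq_left.2 hK]
  have huni : ∀ {K : Finset V}, K ⊆ S ∪ T → (S ∩ K) ∪ (T ∩ K) = K := by
    intro K hK
    rw [← Finset.union_inter_distrib_right, Finset.inter_eq_right.2 hK]
  constructor
  · intro hci E hE e
    obtain ⟨v, rfl⟩ := exists_extend e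
    obtain ⟨h1, h2⟩ := hc E hE
    rw [hll E hE v]
    have hM : avg (M (idx E)) P = avg (S ∩ M (idx E)) P * avg (T ∩ M (idx E)) P
        / avg ((S ∩ M (idx E)) ∩ (T ∩ M (idx E))) P := by
      rw [hint h1, ← avg_prodForm h1 h2, ← hci, avg_avg, Finset.inter_eq_left.2 h2]
    rw [hM]
    exact eff_log_prodForm hPpos (fun h => hE.2.1 (h.trans inter_subset_left))
      (fun h => hE.2.2 (h.trans inter_subset_left)) v
  · intro hz
    -- Every marginal `M(E)` with `E ∈ D` factorizes.
    have good : ∀ j : Fin (k + 1), ∀ E, (E ⊆ S ∪ T ∧ ¬ E ⊆ S ∧ ¬ E ⊆ T) → idx E = j →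
        avg (M j) P = avg (S ∩ M j) P * avg (T ∩ M j) P / avg (S ∩ T) P := by
      intro j
      induction j using WellFoundedLT.induction with
      | ind j ih =>
      intro E hE hj
      obtain ⟨h1, h2⟩ := hc E hE
      rw [hj] at h1 h2
      have hI := hint h1
      have hW := huni h2
      have hform : ∀ K, S ∩ T ⊆ K → K ⊆ M j →
          avg K (avg (S ∩ M j) P * avg (T ∩ M j) P / avg (S ∩ T) P)
            = avg (S ∩ K) P * avg (T ∩ K) P / avg (S ∩ T) P := by
        intro K hK1 hK2
        have := avg_prodForm (P := P) (S := S ∩ M j) (T := T ∩ M j) (K := K)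
          (by rwa [hI]) (by rwa [hW])
        rwa [hI, Finset.inter_assoc, Finset.inter_assoc, Finset.inter_eq_right.2 hK2] at this
      refine eq_of_effects (M := M j) (avg_pos _ hPpos) ?_ (dependsOn_avg _ _) ?_ ?_
      · intro v
        exact div_pos (mul_pos (avg_pos _ hPpos v) (avg_pos _ hPpos v)) (avg_pos _ hPpos v)
      · intro v w hvw
        simp only [Pi.div_apply, Pi.mul_apply]
        rw [dependsOn_avg (S ∩ M j) P fun x hx => hvw x (inter_subset_right hx),
          dependsOn_avg (T ∩ M j) P fun x hx => hvw x (inter_subset_right hx),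
          dependsOn_avg (S ∩ T) P fun x hx => hvw x (h1 hx)]
      · intro F hF
        by_cases hFS : F ⊆ S
        · refine Or.inr ⟨S ∩ M j, Finset.subset_inter hFS hF, ?_⟩
          rw [hform _ (Finset.subset_inter inter_subset_left h1) inter_subset_right, avg_avg,
            Finset.inter_assoc, Finset.inter_self]
          have e1 : S ∩ (S ∩ M j) = S ∩ M j := by rw [← Finset.inter_assoc, Finset.inter_self]
          have e2 : T ∩ (S ∩ M j) = S ∩ T := by
            rw [← Finset.inter_assoc, Finset.inter_comm T S, Finset.inter_eq_left.2 h1]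
          rw [e1, e2]
          ext v
          simp [(avg_pos (S ∩ T) hPpos v).ne']
        by_cases hFT : F ⊆ T
        · refine Or.inr ⟨T ∩ M j, Finset.subset_inter hFT hF, ?_⟩
          rw [hform _ (Finset.subset_inter inter_subset_right h1) inter_subset_right, avg_avg,
            Finset.inter_assoc, Finset.inter_self]
          have e1 : T ∩ (T ∩ M j) = T ∩ M j := by rw [← Finset.inter_assoc, Finset.inter_self]
          have e2 : S ∩ (T ∩ M j) = S ∩ T := by
            rw [← Finset.inter_assoc, Finset.inter_eq_left.2 h1]
          rw [e1, e2]
          ext v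
          simp [(avg_pos (S ∩ T) hPpos v).ne']
        have hFD : F ⊆ S ∪ T ∧ ¬ F ⊆ S ∧ ¬ F ⊆ T := ⟨hF.trans h2, hFS, hFT⟩
        have hle : idx F ≤ j := not_lt.1 fun hlt => (hidx F).2 j hlt hF
        rcases hle.lt_or_eq with hlt | heq
        · -- `F` lies in an earlier marginal, which factorizes by the induction hypothesis.
          refine Or.inr ⟨M (idx F) ∩ M j, Finset.subset_inter (hidx F).1 hF, ?_⟩
          obtain ⟨g1, g2⟩ := hc F hFD
          have hK : S ∩ T ⊆ M (idx F) ∩ M j := Finset.subset_inter g1 h1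
          have hJ := hint g1
          have hV := huni g2
          have hgood := ih (idx F) hlt F hFD rfl
          have := avg_prodForm (P := P) (S := S ∩ M (idx F)) (T := T ∩ M (idx F))
            (K := M (idx F) ∩ M j) (by rwa [hJ]) (by rw [hV]; exact inter_subset_left)
          rw [hJ, ← hgood, avg_avg, Finset.inter_assoc S, Finset.inter_assoc T,
            ← Finset.inter_assoc (M (idx F)) (M (idx F)), Finset.inter_self,
            Finset.inter_right_comm, Finset.inter_self] at this
          rw [hform _ hK inter_subset_right, avg_avg, Finset.inter_assoc, Finset.inter_self, this]
        · left
          intro v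
          have hzF := hz F hFD (fun w => v w.1)
          rw [hll F hFD v, heq] at hzF
          have := eff_log_prodForm hPpos (S := S ∩ M j) (T := T ∩ M j)
            (fun h => hFS (h.trans inter_subset_left))
            (fun h => hFT (h.trans inter_subset_left)) v
          rw [hI] at this
          rw [hzF, this]
    -- The full set `A ∪ B ∪ C` belongs to `D`, and it equals its own first marginal.
    have hN : S ∪ T ⊆ S ∪ T ∧ ¬ S ∪ T ⊆ S ∧ ¬ S ∪ T ⊆ T := by
      rw [← hmem, Finset.mem_filter, Finset.mem_powerset, hU]
      refine ⟨Finset.Subset.refl _, ?_, ?_⟩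
      · obtain ⟨x, hx⟩ := hA i
        exact ⟨x, Finset.mem_inter.2 ⟨by rw [hS]; simp [hx], hx⟩⟩
      · obtain ⟨x, hx⟩ := hB i
        exact ⟨x, Finset.mem_inter.2 ⟨by rw [hT]; simp [hx], hx⟩⟩
    have hMN : M (idx (S ∪ T)) = S ∪ T :=
      Finset.Subset.antisymm (hc _ hN).2 (hidx _).1
    have := good _ _ hN rfl
    rwa [hMN, Finset.inter_eq_left.2 subset_union_left,
      Finset.inter_eq_left.2 subset_union_right] at this
end

section
/- For t, u ∈ (0,1), let P_{t,u} be the probability distribution on {1,2}³ (coordinates A, B, C) given by P(1,1,1) = t/8, P(1,1,2) = (3−t)/8, P(1,2,1) = (1−t)/8, P(1,2,2) = t/8, P(2,1,1) = u/8, P(2,1,2) = (1−u)/8, P(2,2,1) = (3−u)/8, P(2,2,2) = u/8. Then: (i) the conditional odds ratio COR(B,C|A=1) = P(1,1,1)P(1,2,2)/(P(1,1,2)P(1,2,1)) equals t²/((1−t)(3−t)), and for every r ∈ (0,∞) there exists t ∈ (0,1) with t²/((1−t)(3−t)) = r (and similarly COR(B,C|A=2) = u²/((1−u)(3−u)) attains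 every value in (0,∞)); while (ii) the marginal odds ratio of B and C, OR(B,C) = P(+,1,1)P(+,2,2)/(P(+,1,2)P(+,2,1)) where '+' denotes summation over A, equals (t+u)²/(4−t−u)², and (t+u)²/(4−t−u)² ≤ 1 for all t, u ∈ (0,1]. -/
/-!
The odds-ratio formulas follow by cancelling the common factors `1 / 8`; both off-diagonal cells of
the `B, C` margin equal `(4 - t - u) / 8`. The conditional odds ratio attains every `r > 0` by the
intermediate value theorem applied to `s ^ 2 - r * (1 - s) * (3 - s)` on `[0, 1]`, and the marginal
odds ratio is at most `1` because `t + u ≤ 2` gives `t + u ≤ 4 - t - u`.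
-/

open Set

/-- The distribution `P_{t,u}` on `{1,2}³`; coordinates `A, B, C`, categories encoded by
`Fin 2` with `0, 1` standing for `1, 2`. -/
noncomputable def Ptu (t u : ℝ) : Fin 2 → Fin 2 → Fin 2 → ℝ := fun a b c =>
  if a = 0 then
    (if b = 0 then (if c = 0 then t / 8 else (3 - t) / 8)
     else (if c = 0 then (1 - t) / 8 else t / 8))
  else
    (if b = 0 then (if c = 0 then u / 8 else (1 - u) / 8)
     else (if c = 0 then (3 - u) / 8 else u / 8))

/-- For `t, u ∈ (0,1)`: (i) the conditional odds ratios `COR(B,C|A=1)` and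
`COR(B,C|A=2)` of `P_{t,u}` equal `t²/((1−t)(3−t))` and `u²/((1−u)(3−u))` respectively, and this
function attains every value in `(0,∞)`; while (ii) the marginal odds ratio `OR(B,C)` equals
`(t+u)²/(4−t−u)²`, which is at most `1` for all `t, u ∈ (0,1]`. -/
theorem cor_unrestricted_or_restricted (t u : ℝ) (ht : t ∈ Ioo (0 : ℝ) 1)
    (hu : u ∈ Ioo (0 : ℝ) 1) :
    (Ptu t u 0 0 0 * Ptu t u 0 1 1 / (Ptu t u 0 0 1 * Ptu t u 0 1 0) =
        t ^ 2 / ((1 - t) * (3 - t))) ∧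
    (Ptu t u 1 0 0 * Ptu t u 1 1 1 / (Ptu t u 1 0 1 * Ptu t u 1 1 0) =
        u ^ 2 / ((1 - u) * (3 - u))) ∧
    (∀ r : ℝ, 0 < r → ∃ s ∈ Ioo (0 : ℝ) 1, s ^ 2 / ((1 - s) * (3 - s)) = r) ∧
    ((Ptu t u 0 0 0 + Ptu t u 1 0 0) * (Ptu t u 0 1 1 + Ptu t u 1 1 1) /
        ((Ptu t u 0 0 1 + Ptu t u 1 0 1) * (Ptu t u 0 1 0 + Ptu t u 1 1 0)) =
      (t + u) ^ 2 / (4 - t - u) ^ 2) ∧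
    (∀ t' u' : ℝ, t' ∈ Ioc (0 : ℝ) 1 → u' ∈ Ioc (0 : ℝ) 1 →
      (t' + u') ^ 2 / (4 - t' - u') ^ 2 ≤ 1) := by
  have ht3 : 0 < 3 - t := by linarith [ht.2]
  have hu3 : 0 < 3 - u := by linarith [hu.2]
  have ht1 : 0 < 1 - t := by linarith [ht.2]
  have hu1 : 0 < 1 - u := by linarith [hu.2]
  refine ⟨?_, ?_, ?_, ?_, ?_⟩
  · simp only [Ptu, if_true, one_ne_zero, if_false]
    field_simp
  · simp only [Ptu, if_true, one_ne_zero, if_false]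
    field_simp
  · intro r hr
    -- Clearing denominators, the equation says that this quadratic vanishes; it is `-3 * r < 0` at
    -- `0` and `1 > 0` at `1`, so it has a root strictly between.
    have hcont : ContinuousOn (fun s : ℝ => s ^ 2 - r * ((1 - s) * (3 - s))) (Icc 0 1) := by
      fun_prop
    obtain ⟨s, hs, hroot⟩ := intermediate_value_Ioo zero_le_one hcont
      (show (0 : ℝ) ∈ Ioo _ _ by constructor <;> norm_num; exact hr)
    have hs1 : 0 < 1 - s := by linarith [hs.2]
    have hs3 : 0 < 3 - s := by linarith [hs.2]
    refine ⟨s, hs, ?_⟩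
    rw [div_eq_iff (mul_pos hs1 hs3).ne']
    exact sub_eq_zero.mp hroot
  · simp only [Ptu, if_true, one_ne_zero, if_false]
    have h4 : 0 < 4 - t - u := by linarith
    rw [show (3 - t) / 8 + (1 - u) / 8 = (4 - t - u) / 8 by ring,
      show (1 - t) / 8 + (3 - u) / 8 = (4 - t - u) / 8 by ring]
    field_simp
  · rintro a b ⟨ha0, ha1⟩ ⟨hb0, hb1⟩
    -- Since `a + b ≤ 2`, the numerator's base `a + b` is at most `4 - a - b`.
    exact div_le_one_of_le₀ (pow_le_pow_left₀ (by linarith) (by linarith) 2) (sq_nonneg _)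
end

section
/- For every a ∈ (0,1), b ∈ (0,1), and r ∈ (0,∞) there exists a unique strictly positive probability distribution (p_{ij})_{i,j∈{1,2}} on the 2×2 table (all p_{ij} > 0, Σ p_{ij} = 1) with first row sum p_{11} + p_{12} = a, first column sum p_{11} + p_{21} = b, and odds ratio p_{11}p_{22}/(p_{12}p_{21}) = r. (The odds ratio is variation independent of the pair of one-way marginals, and together with them parameterizes the positive 2×2 distributions.) -/
/-!
A table with row sum `a` and column sum `b` is determined by its corner entry `x`: the other
entries are `a - x`, `b - x` and `1 - a - b + x`, all positive exactly when
`max 0 (a + b - 1) < x < min a b`. The odds ratio is `r` iff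
`x * (1 - a - b + x) - r * ((a - x) * (b - x))` vanishes. On that interval the expression is
strictly increasing, which gives uniqueness; it is negative at the left endpoint and positive at
the right one, which gives existence by the intermediate value theorem.
-/

open Set

/-- Existence of the corner entry, by the intermediate value theorem. -/
lemma exists_corner (a b r : ℝ) (ha : a ∈ Ioo (0 : ℝ) 1) (hb : b ∈ Ioo (0 : ℝ) 1)
    (hr : 0 < r) :
    ∃ x, 0 < x ∧ 0 < 1 - a - b + x ∧ x < a ∧ x < b ∧
      x * (1 - a - b + x) = r * ((a - x) * (b - x)) := by
  obtain ⟨ha0, ha1⟩ := ha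
  obtain ⟨hb0, hb1⟩ := hb
  let g : ℝ → ℝ := fun x => x * (1 - a - b + x) - r * ((a - x) * (b - x))
  have hlu : max 0 (a + b - 1) < min a b := by
    rw [max_lt_iff, lt_min_iff, lt_min_iff]
    refine ⟨⟨ha0, hb0⟩, ?_, ?_⟩ <;> linarith
  obtain ⟨hla, hlb⟩ := lt_min_iff.mp hlu
  obtain ⟨hu0, hu1⟩ := max_lt_iff.mp hlu
  have hgl : g (max 0 (a + b - 1)) < 0 := by
    -- one of the two diagonal entries vanishes at the left endpoint
    have hz : max 0 (a + b - 1) * (1 - a - b + max 0 (a + b - 1)) = 0 := by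
      rcases max_choice 0 (a + b - 1) with h | h <;> rw [h] <;> ring
    have hpos := mul_pos hr (mul_pos (sub_pos.mpr hla) (sub_pos.mpr hlb))
    simp only [g]
    linarith
  have hgu : 0 < g (min a b) := by
    -- one of the two off-diagonal entries vanishes at the right endpoint
    have hz : (a - min a b) * (b - min a b) = 0 := by
      rcases min_choice a b with h | h <;> rw [h] <;> ring
    have hpos : 0 < min a b * (1 - a - b + min a b) := mul_pos hu0 (by linarith)
    simp only [g, hz]
    linarith
  have hg : ContinuousOn g (Icc (max 0 (a + b - 1)) (min a b)) := by fun_prop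
  obtain ⟨x, ⟨hx1, hx2⟩, hx⟩ := intermediate_value_Ioo hlu.le hg ⟨hgl, hgu⟩
  obtain ⟨hx0, hx0'⟩ := max_lt_iff.mp hx1
  obtain ⟨hxa, hxb⟩ := lt_min_iff.mp hx2
  exact ⟨x, hx0, by linarith, hxa, hxb, sub_eq_zero.mp hx⟩

/-- One half of the uniqueness of the corner entry: increasing it raises the diagonal product and lowers the
off-diagonal one. -/
lemma corner_le (a b r x y : ℝ) (hr : 0 < r)
    (hx0 : 0 < x) (hx1 : 0 < 1 - a - b + x) (hxb : x < b)
    (hx : x * (1 - a - b + x) = r * ((a - x) * (b - x)))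
    (hy : y * (1 - a - b + y) = r * ((a - y) * (b - y))) (hya : y < a) :
    y ≤ x := by
  by_contra! h
  have h1 : x * (1 - a - b + x) < y * (1 - a - b + y) :=
    mul_lt_mul'' h (by linarith) hx0.le hx1.le
  have h2 : (a - y) * (b - y) ≤ (a - x) * (b - x) := by
    nlinarith [mul_pos (sub_pos.mpr h) (sub_pos.mpr hya),
      mul_pos (sub_pos.mpr h) (sub_pos.mpr hxb)]
  have h3 := mul_le_mul_of_nonneg_left h2 hr.le
  linarith

/-- For every `a, b ∈ (0,1)` and `r ∈ (0,∞)` there is a unique strictly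
positive 2×2 probability distribution (indices `0, 1` standing for `1, 2`) with first row sum
`a`, first column sum `b`, and odds ratio `r`: the odds ratio is variation independent of the
pair of one-way marginals and together with them parameterizes the positive 2×2
distributions. -/
theorem odds_ratio_and_marginals_parameterize
    (a b r : ℝ) (ha : a ∈ Ioo (0 : ℝ) 1) (hb : b ∈ Ioo (0 : ℝ) 1) (hr : 0 < r) :
    ∃! p : Fin 2 → Fin 2 → ℝ,
      (∀ i j, 0 < p i j) ∧
      p 0 0 + p 0 1 + p 1 0 + p 1 1 = 1 ∧
      p 0 0 + p 0 1 = a ∧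
      p 0 0 + p 1 0 = b ∧
      p 0 0 * p 1 1 / (p 0 1 * p 1 0) = r := by
  obtain ⟨x, hx0, hx1, hxa, hxb, hx⟩ := exists_corner a b r ha hb hr
  have hax := sub_pos.mpr hxa
  have hbx := sub_pos.mpr hxb
  refine ⟨![![x, a - x], ![b - x, 1 - a - b + x]], ⟨?_, ?_, ?_, ?_, ?_⟩, ?_⟩
  · intro i j
    fin_cases i <;> fin_cases j <;> simpa
  · simp
    ring
  · simp
  · simp
  · simp only [Matrix.cons_val_zero, Matrix.cons_val_one]
    rw [div_eq_iff (mul_pos hax hbx).ne']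
    exact hx
  · rintro q ⟨hq, hsum, hrow, hcol, hodds⟩
    rw [div_eq_iff (mul_pos (hq 0 1) (hq 1 0)).ne'] at hodds
    have e01 : q 0 1 = a - q 0 0 := by linarith
    have e10 : q 1 0 = b - q 0 0 := by linarith
    have e11 : q 1 1 = 1 - a - b + q 0 0 := by linarith
    have h01 := hq 0 1
    have h10 := hq 1 0
    have h11 := hq 1 1
    rw [e01] at h01
    rw [e10] at h10
    rw [e11] at h11
    rw [e01, e10, e11] at hodds
    have e00 : q 0 0 = x := le_antisymm
      (corner_le a b r x (q 0 0) hr hx0 hx1 hxb hx hodds (by linarith))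
      (corner_le a b r (q 0 0) x hr (hq 0 0) h11 (by linarith) hodds hx hxa)
    ext i j
    fin_cases i <;> fin_cases j <;> simp [e01, e10, e11, e00]
end
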